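/- arXiv:2012.08766 — 2 statements merged into one kernel-verified Lean document; each statement's English description precedes it below -/
import Mathlib

section
/- Let 1<p<∞, μ>0 and let w ∈ Q(ℝ₊) be admissible, i.e. there exist η₀>0 and K>0 with ∫_0^t w(s)^{-1} ds ≥ e^{-K/√t} for all 0<t<η₀. Then for every sufficiently small η>0 there exist positive numbers C₀, C₁, L (depending only on w, p, η, μ, not on u) such that for every u ∈ C_c^1((0,η]): ∫_0^η ( |u'(t)|^p − (|u(t)|^p / F_η(t)^p)( Λ_p + C₀ / G_η(t)^2 ) ) W_p(t) dt ≥ C₁ ∫_0^η ( |u'(t)|^p + (|u(t)|^p / F_η(t)^p)( Λ_p + C₀ / G_η(t)^2 ) ) W_p(t) · t dt + L |u(η)|^p. -/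
open MeasureTheory Set

/-- `f_η(t) = ∫_0^t w(s)⁻¹ ds`  (case `w ∈ Q(ℝ₊)`). -/
noncomputable def fQ (w : ℝ → ℝ) (t : ℝ) : ℝ := ∫ s in (0:ℝ)..t, (w s)⁻¹

/-- `F_η(t) = w(t) f_η(t)`. -/
noncomputable def FQ (w : ℝ → ℝ) (t : ℝ) : ℝ := w t * fQ w t

/-- `G_η(t) = μ + ∫_t^η F_η(s)⁻¹ ds`. -/
noncomputable def GQ (w : ℝ → ℝ) (μ η t : ℝ) : ℝ := μ + ∫ s in t..η, (FQ w s)⁻¹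

/-- `W_p(t) = w(t)^(p-1)`. -/
noncomputable def Wp (w : ℝ → ℝ) (p t : ℝ) : ℝ := w t ^ (p - 1)

/-- Young's inequality with a weight `ρ`, in the form used for Picone-type estimates. -/
lemma young_weighted {p q : ℝ} (h : p.HolderConjugate q) {U s y ρ : ℝ} (hU : 0 ≤ U)
    (hs : 0 ≤ s) (hy : 0 ≤ y) (hρ : 0 < ρ) :
    p * y * U ^ (p - 1) * s ≤ ρ * s ^ p + (p - 1) * U ^ p * (y ^ q * ρ ^ (1 - q)) := by
  have hp := h.pos
  have hq := h.symm.pos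
  have key := Real.young_inequality_of_nonneg (a := ρ ^ (1 / p) * s)
    (b := y * U ^ (p - 1) * ρ ^ (-(1 / p))) (by positivity) (by positivity) h
  have e1 : (ρ ^ (1 / p) * s) ^ p = ρ * s ^ p := by
    rw [Real.mul_rpow (by positivity) hs, ← Real.rpow_mul hρ.le, one_div_mul_cancel hp.ne',
      Real.rpow_one]
  have e2 : (y * U ^ (p - 1) * ρ ^ (-(1 / p))) ^ q = U ^ p * (y ^ q * ρ ^ (1 - q)) := by
    rw [Real.mul_rpow (by positivity) (by positivity), Real.mul_rpow hy (by positivity),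
      ← Real.rpow_mul hU, ← Real.rpow_mul hρ.le, h.sub_one_mul_conj,
      show -(1 / p) * q = 1 - q by
        have := h.symm.div_conj_eq_sub_one
        rw [← neg_sub q 1, ← this]; ring]
    ring
  have e3 : ρ ^ (1 / p) * s * (y * U ^ (p - 1) * ρ ^ (-(1 / p))) = y * U ^ (p - 1) * s := by
    rw [Real.rpow_neg hρ.le]
    have : ρ ^ (1 / p) ≠ 0 := (Real.rpow_pos_of_pos hρ _).ne'
    field_simp
  rw [e1, e2, e3] at key
  have := mul_le_mul_of_nonneg_left key hp.le
  have e4 : p / q = p - 1 := h.div_conj_eq_sub_one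
  calc p * y * U ^ (p - 1) * s = p * (y * U ^ (p - 1) * s) := by ring
    _ ≤ _ := this
    _ = ρ * s ^ p + p / q * (U ^ p * (y ^ q * ρ ^ (1 - q))) := by
        field_simp
    _ = _ := by rw [e4]; ring

lemma exp_neg_le_quadratic {y : ℝ} (hy : 0 ≤ y) : Real.exp (-y) ≤ 1 - y + y ^ 2 / 2 := by
  have h := Real.quadratic_le_exp_of_nonneg hy
  rw [Real.exp_neg]
  refine inv_le_of_inv_le₀ (by nlinarith) (le_trans ?_ h)
  rw [inv_le_iff_one_le_mul₀ (by nlinarith)]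
  nlinarith [sq_nonneg (y ^ 2)]

lemma one_sub_rpow_mul_le {q x τ : ℝ} (hq : 1 < q) (hx : 0 ≤ x) (hx1 : x < 1) (hτ : 0 ≤ τ)
    (hτ1 : τ ≤ 1 / 2) (hτq : 2 * (q - 1) * τ ≤ 1) :
    (1 - x) ^ q * (1 - τ) ^ (1 - q) ≤ 1 - q * x + (q * x) ^ 2 / 2 + 4 * (q - 1) * τ := by
  have hq0 : 0 < q := by linarith
  have h1 : (1 - x) ^ q ≤ 1 - q * x + (q * x) ^ 2 / 2 := by
    refine le_trans ?_ (exp_neg_le_quadratic (by positivity))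
    calc (1 - x) ^ q ≤ (Real.exp (-x)) ^ q :=
          Real.rpow_le_rpow (by linarith) (Real.one_sub_le_exp_neg x) hq0.le
      _ = _ := by rw [← Real.exp_mul]; ring_nf
  have h2 : (1 - x) ^ q ≤ 1 := Real.rpow_le_one (by linarith) (by linarith) hq0.le
  have h3 : (1 - τ) ^ (1 - q) ≤ 1 + 4 * (q - 1) * τ := by
    have hinv : (1 - τ)⁻¹ ≤ Real.exp (2 * τ) := by
      refine le_trans ?_ (Real.add_one_le_exp _)
      rw [inv_le_iff_one_le_mul₀ (by linarith)]
      nlinarith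
    have hy0 : 0 ≤ 2 * (q - 1) * τ := by
      have : 0 ≤ q - 1 := by linarith
      positivity
    have habs := Real.abs_exp_sub_one_le (x := 2 * (q - 1) * τ)
      (by rw [abs_of_nonneg hy0]; exact hτq)
    rw [abs_of_nonneg hy0] at habs
    have := le_abs_self (Real.exp (2 * (q - 1) * τ) - 1)
    calc (1 - τ) ^ (1 - q) = ((1 - τ)⁻¹) ^ (q - 1) := by
          rw [Real.inv_rpow (by linarith), ← Real.rpow_neg (by linarith), neg_sub]
      _ ≤ (Real.exp (2 * τ)) ^ (q - 1) :=
          Real.rpow_le_rpow (inv_nonneg.2 (by linarith)) hinv (by linarith)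
      _ = Real.exp (2 * (q - 1) * τ) := by rw [← Real.exp_mul]; ring_nf
      _ ≤ _ := by linarith
  have h0 : 0 ≤ (1 - x) ^ q := Real.rpow_nonneg (by linarith) _
  have hc : 0 ≤ 4 * (q - 1) * τ := by
    have : 0 ≤ q - 1 := by linarith
    positivity
  calc (1 - x) ^ q * (1 - τ) ^ (1 - q) ≤ (1 - x) ^ q * (1 + 4 * (q - 1) * τ) :=
        mul_le_mul_of_nonneg_left h3 h0
    _ = (1 - x) ^ q + (1 - x) ^ q * (4 * (q - 1) * τ) := by ring
    _ ≤ _ := by nlinarith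

/-- The pointwise Picone-type inequality after dividing out all weights.  Here `τ = C₁ t`
and `β / 8 = C₀ / Λ_p`. -/
lemma picone_normalized {p q : ℝ} (h : p.HolderConjugate q) {U s β G τ : ℝ} (hU : 0 ≤ U)
    (hs : 0 ≤ s) (hβ : 0 < β) (hG : 0 < G) (hβG : β / G < 1) (hβp : β * p ≤ 1) (hτ : 0 ≤ τ)
    (hτq : 2 * q * τ ≤ 1) (hτG : τ ≤ β / 20 / G ^ 2) :
    p * (1 - β / G) * U ^ (p - 1) * s - U ^ p * (p * (1 - β / G) + q * (β / G ^ 2)) ≤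
      (1 - τ) * s ^ p - (1 + τ) * (1 + β / 8 / G ^ 2) * U ^ p := by
  have hp := h.lt
  have hq := h.symm.lt
  have hτ1 : τ ≤ 1 / 2 := by nlinarith
  have hy := young_weighted h hU hs (y := 1 - β / G) (ρ := 1 - τ) (by linarith) (by linarith)
  have hb := one_sub_rpow_mul_le hq (x := β / G) (by positivity) hβG hτ hτ1 (by nlinarith)
  have hUp : 0 ≤ U ^ p := Real.rpow_nonneg hU _
  have hpq : (p - 1) * (q - 1) = 1 := by
    have := h.mul_eq_add
    linarith
  have hpq' : (p - 1) * q = p := by linarith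
  set Y := (1 - β / G) ^ q * (1 - τ) ^ (1 - q)
  set g := 1 / G ^ 2 with hg
  have hg0 : 0 < g := by positivity
  have e1 : β / G ^ 2 = β * g := by rw [hg]; ring
  have e2 : β / 8 / G ^ 2 = β / 8 * g := by rw [hg]; ring
  have e3 : β / 20 / G ^ 2 = β / 20 * g := by rw [hg]; ring
  have e4 : (β / G) ^ 2 = β ^ 2 * g := by rw [hg]; ring
  rw [e1, e2]
  rw [e3] at hτG
  have hY : (p - 1) * Y ≤ (p - 1) - p * (β / G) + p * q * (β ^ 2 * g) / 2 + 4 * τ := by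
    have := mul_le_mul_of_nonneg_left hb (by linarith : 0 ≤ p - 1)
    have e : (p - 1) * (1 - q * (β / G) + (q * (β / G)) ^ 2 / 2 + 4 * (q - 1) * τ) =
        (p - 1) - ((p - 1) * q) * (β / G) + ((p - 1) * q) * q * (β / G) ^ 2 / 2
          + 4 * ((p - 1) * (q - 1)) * τ := by ring
    rw [e, hpq, hpq', e4] at this
    linarith
  have hβg : 0 < β * g := by positivity
  have hquad : p * q * (β ^ 2 * g) ≤ q * (β * g) := by
    have : (q * (β * g)) * (β * p) ≤ (q * (β * g)) * 1 :=
      mul_le_mul_of_nonneg_left hβp (by positivity)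
    nlinarith
  have hqb : β * g ≤ q * (β * g) := by nlinarith
  have hprod : τ * (β / 8 * g) ≤ 1 / 2 * (β / 8 * g) :=
    mul_le_mul_of_nonneg_right hτ1 (by positivity)
  have hcoef : (p - 1) * Y + (1 + τ) * (1 + β / 8 * g) ≤ p * (1 - β / G) + q * (β * g) := by
    nlinarith
  have := mul_le_mul_of_nonneg_right hcoef hUp
  nlinarith

section Primitive

variable {w : ℝ → ℝ}

lemma intervalIntegrable_inv_of_Q
    (hwQ : ∀ b, 0 < b → IntegrableOn (fun s => (w s)⁻¹) (Ioo 0 b)) {t : ℝ} (ht : 0 < t) :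
    IntervalIntegrable (fun s => (w s)⁻¹) volume 0 t := by
  rw [intervalIntegrable_iff_integrableOn_Ioo_of_le ht.le]
  exact hwQ t ht

lemma fQ_pos (hw_pos : ∀ t, 0 < t → 0 < w t)
    (hwQ : ∀ b, 0 < b → IntegrableOn (fun s => (w s)⁻¹) (Ioo 0 b)) {t : ℝ} (ht : 0 < t) :
    0 < fQ w t :=
  intervalIntegral.intervalIntegral_pos_of_pos_on (intervalIntegrable_inv_of_Q hwQ ht)
    (fun s hs => inv_pos.2 (hw_pos s hs.1)) ht

lemma hasDerivAt_fQ (hw_pos : ∀ t, 0 < t → 0 < w t) (hw_cont : ContinuousOn w (Ioi 0))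
    (hwQ : ∀ b, 0 < b → IntegrableOn (fun s => (w s)⁻¹) (Ioo 0 b)) {t : ℝ} (ht : 0 < t) :
    HasDerivAt (fQ w) (w t)⁻¹ t := by
  have hc : ContinuousOn (fun s => (w s)⁻¹) (Ioi 0) :=
    hw_cont.inv₀ fun s hs => (hw_pos s hs).ne'
  exact intervalIntegral.integral_hasDerivAt_right (intervalIntegrable_inv_of_Q hwQ ht)
    (hc.stronglyMeasurableAtFilter isOpen_Ioi t ht) (hc.continuousAt (Ioi_mem_nhds ht))

lemma continuousOn_fQ (hw_pos : ∀ t, 0 < t → 0 < w t) (hw_cont : ContinuousOn w (Ioi 0))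
    (hwQ : ∀ b, 0 < b → IntegrableOn (fun s => (w s)⁻¹) (Ioo 0 b)) :
    ContinuousOn (fQ w) (Ioi 0) := fun _ ht =>
  (hasDerivAt_fQ hw_pos hw_cont hwQ ht).continuousAt.continuousWithinAt

lemma FQ_pos (hw_pos : ∀ t, 0 < t → 0 < w t)
    (hwQ : ∀ b, 0 < b → IntegrableOn (fun s => (w s)⁻¹) (Ioo 0 b)) {t : ℝ} (ht : 0 < t) :
    0 < FQ w t := mul_pos (hw_pos t ht) (fQ_pos hw_pos hwQ ht)

lemma GQ_eq_log (hw_pos : ∀ t, 0 < t → 0 < w t) (hw_cont : ContinuousOn w (Ioi 0))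
    (hwQ : ∀ b, 0 < b → IntegrableOn (fun s => (w s)⁻¹) (Ioo 0 b)) (μ : ℝ) {t η : ℝ}
    (ht : 0 < t) (hη : 0 < η) :
    GQ w μ η t = μ + (Real.log (fQ w η) - Real.log (fQ w t)) := by
  have hsub : uIcc t η ⊆ Ioi 0 := fun s hs => lt_of_lt_of_le (lt_min ht hη) hs.1
  rw [GQ, intervalIntegral.integral_eq_sub_of_hasDerivAt (f := fun s => Real.log (fQ w s))]
  · intro s hs
    have hs0 : 0 < s := hsub hs
    refine ((hasDerivAt_fQ hw_pos hw_cont hwQ hs0).log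
      (fQ_pos hw_pos hwQ hs0).ne').congr_deriv ?_
    rw [FQ, mul_inv, div_eq_mul_inv]
  · refine ContinuousOn.intervalIntegrable (ContinuousOn.inv₀ ?_ ?_)
    · exact (hw_cont.mul (continuousOn_fQ hw_pos hw_cont hwQ)).mono hsub
    · exact fun s hs => (FQ_pos hw_pos hwQ (hsub hs)).ne'

lemma le_GQ (hw_pos : ∀ t, 0 < t → 0 < w t)
    (hwQ : ∀ b, 0 < b → IntegrableOn (fun s => (w s)⁻¹) (Ioo 0 b)) (μ : ℝ) {t η : ℝ}
    (ht : 0 < t) (htη : t ≤ η) : μ ≤ GQ w μ η t := by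
  have : 0 ≤ ∫ s in t..η, (FQ w s)⁻¹ := intervalIntegral.integral_nonneg htη fun s hs =>
    inv_nonneg.2 (FQ_pos hw_pos hwQ (ht.trans_le hs.1)).le
  rw [GQ]; linarith

/-- Admissibility bounds `t` by a multiple of `G_η(t)⁻²`. -/
lemma mul_GQ_sq_le (hw_pos : ∀ t, 0 < t → 0 < w t) (hw_cont : ContinuousOn w (Ioi 0))
    (hwQ : ∀ b, 0 < b → IntegrableOn (fun s => (w s)⁻¹) (Ioo 0 b)) {μ K t η : ℝ} (hμ : 0 < μ)
    (ht : 0 < t) (htη : t ≤ η) (hK : Real.exp (-K / Real.sqrt t) ≤ fQ w t) :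
    t * GQ w μ η t ^ 2 ≤ ((μ + |Real.log (fQ w η)|) * Real.sqrt η + K) ^ 2 := by
  have hG : 0 < GQ w μ η t := hμ.trans_le (le_GQ hw_pos hwQ μ ht htη)
  have hst : 0 < Real.sqrt t := Real.sqrt_pos.2 ht
  have hlog : -K / Real.sqrt t ≤ Real.log (fQ w t) :=
    (Real.le_log_iff_exp_le (fQ_pos hw_pos hwQ ht)).2 hK
  rw [div_le_iff₀ hst] at hlog
  have hsq : Real.sqrt t ≤ Real.sqrt η := Real.sqrt_le_sqrt htη
  have hle : Real.sqrt t * GQ w μ η t ≤ (μ + |Real.log (fQ w η)|) * Real.sqrt η + K := by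
    rw [GQ_eq_log hw_pos hw_cont hwQ μ ht (ht.trans_le htη)]
    have h1 : Real.sqrt t * (μ + Real.log (fQ w η)) ≤
        Real.sqrt t * (μ + |Real.log (fQ w η)|) :=
      mul_le_mul_of_nonneg_left (by linarith [le_abs_self (Real.log (fQ w η))]) hst.le
    have h2 : Real.sqrt t * (μ + |Real.log (fQ w η)|) ≤
        Real.sqrt η * (μ + |Real.log (fQ w η)|) :=
      mul_le_mul_of_nonneg_right hsq (by positivity)
    nlinarith
  calc t * GQ w μ η t ^ 2 = (Real.sqrt t * GQ w μ η t) ^ 2 := by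
        rw [mul_pow, Real.sq_sqrt ht.le]
    _ ≤ _ := pow_le_pow_left₀ (by positivity) hle 2

/-- The vector field `f^{1-p} (1 - β / G)` used to test the Hardy inequality. -/
lemma hasDerivAt_hardyField (hw_pos : ∀ t, 0 < t → 0 < w t) (hw_cont : ContinuousOn w (Ioi 0))
    (hwQ : ∀ b, 0 < b → IntegrableOn (fun s => (w s)⁻¹) (Ioo 0 b)) (p : ℝ) {β μ t η : ℝ}
    (ht : 0 < t) (hη : 0 < η) (hG : GQ w μ η t ≠ 0) :
    HasDerivAt (fun s => fQ w s ^ (1 - p) * (1 - β / GQ w μ η s))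
      (-(fQ w t ^ (-p) / w t * ((p - 1) * (1 - β / GQ w μ η t) + β / GQ w μ η t ^ 2))) t := by
  have hf := hasDerivAt_fQ hw_pos hw_cont hwQ ht
  have hf0 := fQ_pos hw_pos hwQ ht
  have hw0 := hw_pos t ht
  have hGd : HasDerivAt (GQ w μ η) (-((w t)⁻¹ / fQ w t)) t := by
    have h := ((hf.log hf0.ne').const_sub (Real.log (fQ w η))).const_add μ
    refine h.congr_of_eventuallyEq ?_
    filter_upwards [Ioi_mem_nhds ht] with s hs
    exact GQ_eq_log hw_pos hw_cont hwQ μ hs hη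
  have h1 := hf.rpow_const (p := 1 - p) (Or.inl hf0.ne')
  have h2 := ((hGd.inv hG).const_mul β).const_sub 1
  refine (h1.mul h2).congr_deriv ?_
  have e1 : fQ w t ^ (1 - p - 1) = fQ w t ^ (-p) := by ring_nf
  have e2 : fQ w t ^ (1 - p) = fQ w t ^ (-p) * fQ w t := by
    rw [show (1 - p) = -p + 1 by ring, Real.rpow_add hf0, Real.rpow_one]
  rw [Pi.inv_apply, e1, e2]
  field_simp
  ring

end Primitive

/-- An interval integral only sees the part of the interval where the integrand is nonzero. -/
lemma integral_eq_integral_of_vanishing {g : ℝ → ℝ} {a b : ℝ} (ha : 0 ≤ a)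
    (hg : IntervalIntegrable g volume a b) (h0 : ∀ t ∈ Ioc 0 a, g t = 0) :
    ∫ t in (0:ℝ)..b, g t = ∫ t in a..b, g t := by
  have hz : EqOn g (fun _ => 0) (uIoc 0 a) := by rwa [uIoc_of_le ha]
  have hi : IntervalIntegrable g volume 0 a :=
    (intervalIntegrable_congr hz).2 intervalIntegrable_const
  rw [← intervalIntegral.integral_add_adjacent_intervals hi hg,
    intervalIntegral.integral_congr_ae (g := fun _ => (0:ℝ)) (Filter.Eventually.of_forall hz)]
  simp

/-- The weighted pointwise inequality between the derivative of `|u|^p φ` and the integrands. -/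
lemma picone_weighted {p q : ℝ} (h : p.HolderConjugate q) {u v f w β G τ Λ : ℝ} (hf : 0 < f)
    (hw : 0 < w) (hΛ : Λ = (1 - 1 / p) ^ p) (hβ : 0 < β) (hG : 0 < G) (hβG : β / G < 1)
    (hβp : β * p ≤ 1) (hτ : 0 ≤ τ) (hτq : 2 * q * τ ≤ 1) (hτG : τ ≤ β / 20 / G ^ 2) :
    p * |u| ^ (p - 2) * u * v * (Λ * q * (f ^ (1 - p) * (1 - β / G))) +
        |u| ^ p * (Λ * q *
          -(f ^ (-p) / w * ((p - 1) * (1 - β / G) + β / G ^ 2))) ≤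
      (|v| ^ p - |u| ^ p / (w * f) ^ p * (Λ + Λ * β / 8 / G ^ 2)) * w ^ (p - 1) -
        τ * ((|v| ^ p + |u| ^ p / (w * f) ^ p * (Λ + Λ * β / 8 / G ^ 2)) * w ^ (p - 1)) := by
  have hp := h.lt
  have hq0 := h.symm.pos
  have hpq : (p - 1) * q = p := h.sub_one_mul_conj
  have hq1 : 1 - 1 / p = q⁻¹ := by
    have := h.inv_add_inv_eq_one
    rw [one_div]; linarith
  have hΛ0 : 0 < Λ := by
    rw [hΛ, hq1]; exact Real.rpow_pos_of_pos (inv_pos.2 hq0) _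
  set N := f ^ (-p) / w with hN
  have hN0 : 0 < N := div_pos (Real.rpow_pos_of_pos hf _) hw
  have key := picone_normalized h (U := |u|) (s := q * (|v| * (w * f))) (abs_nonneg _)
    (by positivity) hβ hG hβG hβp hτ hτq hτG
  have key' := mul_le_mul_of_nonneg_left key (mul_pos hΛ0 hN0).le
  have ew : w ^ (p - 1) = w ^ p / w := by rw [Real.rpow_sub hw, Real.rpow_one]
  have efp : f ^ (-p) = (f ^ p)⁻¹ := Real.rpow_neg hf.le p
  have hfp : f ^ p ≠ 0 := (Real.rpow_pos_of_pos hf _).ne'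
  have hwp : w ^ p ≠ 0 := (Real.rpow_pos_of_pos hw _).ne'
  have e1 : w ^ (p - 1) / (w * f) ^ p = N := by
    rw [hN, ew, efp, Real.mul_rpow hw.le hf.le]
    field_simp
  have e2 : Λ * N * (q * (|v| * (w * f))) ^ p = |v| ^ p * w ^ (p - 1) := by
    have hqp : q ^ p ≠ 0 := (Real.rpow_pos_of_pos hq0 _).ne'
    rw [hN, ew, efp, Real.mul_rpow hq0.le (by positivity), Real.mul_rpow (abs_nonneg _)
      (by positivity), Real.mul_rpow hw.le hf.le, hΛ, hq1, Real.inv_rpow hq0.le]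
    field_simp
  have e3 : f ^ (1 - p) = N * (w * f) := by
    rw [hN, sub_eq_add_neg, Real.rpow_add hf, Real.rpow_one]
    field_simp
  have e4 : |u| ^ (p - 2) * u * v ≤ |u| ^ (p - 1) * |v| := by
    calc |u| ^ (p - 2) * u * v ≤ |(|u| ^ (p - 2) * u * v)| := le_abs_self _
      _ = |u| ^ (p - 2) * |u| * |v| := by
          rw [abs_mul, abs_mul, abs_of_nonneg (Real.rpow_nonneg (abs_nonneg u) _)]
      _ = |u| ^ (p - 1) * |v| := by
          congr 1
          rcases eq_or_ne u 0 with rfl | hu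
          · rw [abs_zero, mul_zero, Real.zero_rpow (by linarith)]
          · rw [show p - 1 = p - 2 + 1 by ring, Real.rpow_add (abs_pos.2 hu), Real.rpow_one]
  have hc : 0 ≤ p * (Λ * q * (N * (w * f) * (1 - β / G))) := by
    have : 0 < 1 - β / G := by linarith
    positivity
  have e5 := mul_le_mul_of_nonneg_right e4 hc
  rw [e3]
  have lhs_le : p * |u| ^ (p - 2) * u * v * (Λ * q * (N * (w * f) * (1 - β / G))) +
      |u| ^ p * (Λ * q * -(N * ((p - 1) * (1 - β / G) + β / G ^ 2))) ≤
      Λ * N * (p * (1 - β / G) * |u| ^ (p - 1) * (q * (|v| * (w * f))) -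
        |u| ^ p * ((p - 1) * q * (1 - β / G) + q * (β / G ^ 2))) := by
    linarith
  rw [hpq] at lhs_le
  refine lhs_le.trans (key'.trans (le_of_eq ?_))
  calc _ = (1 - τ) * (Λ * N * (q * (|v| * (w * f))) ^ p) -
        Λ * N * ((1 + τ) * (1 + β / 8 / G ^ 2) * |u| ^ p) := by ring
    _ = _ := by rw [e2, ← e1]; ring

/-- For admissible `w ∈ Q(ℝ₊)` and all sufficiently small `η > 0`,
a refined weighted Hardy inequality holds with first-order (in `t`) remainder and
boundary term `+ L |u(η)|^p`. -/
theorem hardy_Q_admissible_refined (p μ : ℝ) (hp : 1 < p) (hμ : 0 < μ)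
    (w : ℝ → ℝ)
    (hw_pos : ∀ t, 0 < t → 0 < w t)
    (hw_smooth : ContDiffOn ℝ 1 w (Set.Ioi 0))
    (hw_lim : ∃ a : ENNReal, Filter.Tendsto (fun t => ENNReal.ofReal (w t))
        (nhdsWithin (0:ℝ) (Set.Ioi 0)) (nhds a))
    (hwQ : ∀ b, 0 < b → MeasureTheory.IntegrableOn (fun s => (w s)⁻¹) (Set.Ioo 0 b))
    (hadm : ∃ η₀ K : ℝ, 0 < η₀ ∧ 0 < K ∧ ∀ t, 0 < t → t < η₀ →
        Real.exp (-K / Real.sqrt t) ≤ ∫ s in (0:ℝ)..t, (w s)⁻¹) :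
    ∃ η₁ : ℝ, 0 < η₁ ∧ ∀ η : ℝ, 0 < η → η ≤ η₁ →
      ∃ C₀ C₁ L : ℝ, 0 < C₀ ∧ 0 < C₁ ∧ 0 < L ∧
        ∀ u u' : ℝ → ℝ,
          (∀ t ∈ Set.Ioc (0:ℝ) η, HasDerivWithinAt u (u' t) (Set.Ioc (0:ℝ) η) t) →
          ContinuousOn u' (Set.Ioc (0:ℝ) η) →
          (∃ a, 0 < a ∧ ∀ t ≤ a, u t = 0) →
          (∫ t in (0:ℝ)..η,
              (|u' t| ^ p - |u t| ^ p / FQ w t ^ p *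
                  ((1 - 1 / p) ^ p + C₀ / GQ w μ η t ^ 2)) * Wp w p t)
          ≥ C₁ * (∫ t in (0:ℝ)..η,
              (|u' t| ^ p + |u t| ^ p / FQ w t ^ p *
                  ((1 - 1 / p) ^ p + C₀ / GQ w μ η t ^ 2)) * Wp w p t * t)
            + L * |u η| ^ p := by
  obtain ⟨η₀, K, hη₀, hK, hadm⟩ := hadm
  have hw_cont : ContinuousOn w (Ioi 0) := hw_smooth.continuousOn
  refine ⟨η₀ / 2, by positivity, fun η hη hηle => ?_⟩
  have hf : ∀ t, 0 < t → 0 < fQ w t := fun t => fQ_pos hw_pos hwQ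
  have hF : ∀ t, 0 < t → 0 < FQ w t := fun t => FQ_pos hw_pos hwQ
  have hG : ∀ t, 0 < t → t ≤ η → μ ≤ GQ w μ η t := fun t => le_GQ hw_pos hwQ μ
  obtain ⟨q, h⟩ : ∃ q, p.HolderConjugate q := ⟨_, Real.HolderConjugate.conjExponent hp⟩
  have hq := h.symm.lt
  have hq0 := h.symm.pos
  have hp0 := h.pos
  set Λ : ℝ := (1 - 1 / p) ^ p with hΛ
  have hΛ0 : 0 < Λ := Real.rpow_pos_of_pos (by rw [sub_pos, div_lt_one hp0]; exact hp) _
  obtain ⟨M, hM0, hM⟩ : ∃ M, 0 < M ∧ ∀ t, 0 < t → t ≤ η → t * GQ w μ η t ^ 2 ≤ M :=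
    ⟨((μ + |Real.log (fQ w η)|) * Real.sqrt η + K) ^ 2, by positivity, fun t ht htη =>
      mul_GQ_sq_le hw_pos hw_cont hwQ hμ ht htη (hadm t ht (by linarith))⟩
  set β := min (1 / p) (μ / 2)
  have hβ : 0 < β := lt_min (by positivity) (by positivity)
  have hβp : β * p ≤ 1 := by
    rw [← le_div_iff₀ hp0]; exact min_le_left _ _
  have hβμ : β < μ := (min_le_right _ _).trans_lt (by linarith)
  set C₁ := min (1 / (2 * q * η)) (β / 20 / M)
  have hC₁ : 0 < C₁ := lt_min (by positivity) (by positivity)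
  have hC₁q : C₁ * (2 * q * η) ≤ 1 := by
    rw [← le_div_iff₀ (by positivity)]; exact min_le_left _ _
  have hC₁M : C₁ * M ≤ β / 20 := by
    rw [← le_div_iff₀ hM0]; exact min_le_right _ _
  have hGη : GQ w μ η η = μ := by simp [GQ]
  refine ⟨Λ * β / 8, C₁, Λ * q * (fQ w η ^ (1 - p) * (1 - β / μ)), by positivity, hC₁, ?_, ?_⟩
  · have h1 : 0 < 1 - β / μ := by rw [sub_pos, div_lt_one hμ]; exact hβμ
    have h2 : 0 < fQ w η ^ (1 - p) := Real.rpow_pos_of_pos (hf η hη) _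
    positivity
  rintro u u' hu hu' ⟨a₀, ha₀, hua⟩
  set a := min a₀ η / 2 with ha_def
  have hmin : 0 < min a₀ η := lt_min ha₀ hη
  have ha : 0 < a := by positivity
  have haa₀ : a < a₀ := by linarith [min_le_left a₀ η]
  have haη : a < η := by linarith [min_le_right a₀ η]
  have hu'0 : ∀ t ∈ Ioc 0 a, u' t = 0 := by
    intro t ht
    have hd : HasDerivAt u (u' t) t := (hu t ⟨ht.1, ht.2.trans haη.le⟩).hasDerivAt
      (Ioc_mem_nhds ht.1 (ht.2.trans_lt haη))
    have hz : HasDerivAt u 0 t := (hasDerivAt_const t (0:ℝ)).congr_of_eventuallyEq (by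
      filter_upwards [Iio_mem_nhds (ht.2.trans_lt haa₀)] with s hs using hua s (le_of_lt hs))
    exact hd.unique hz
  have hsub : Icc a η ⊆ Ioi 0 := fun s hs => ha.trans_le hs.1
  have hsub' : Icc a η ⊆ Ioc 0 η := fun s hs => ⟨ha.trans_le hs.1, hs.2⟩
  have hφd : ∀ t, 0 < t → t ≤ η → _ := fun t ht htη =>
    hasDerivAt_hardyField hw_pos hw_cont hwQ p (β := β) (μ := μ) ht hη
      (hμ.trans_le (hG t ht htη)).ne'
  have cu : ContinuousOn (fun t => |u t| ^ p) (Icc a η) :=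
    (ContinuousOn.abs fun t ht => (hu t (hsub' ht)).continuousWithinAt.mono hsub').rpow_const
      fun _ _ => Or.inr hp0.le
  have cu' : ContinuousOn (fun t => |u' t| ^ p) (Icc a η) :=
    (hu'.mono hsub').abs.rpow_const fun _ _ => Or.inr hp0.le
  have cw : ContinuousOn w (Icc a η) := hw_cont.mono hsub
  have cf : ContinuousOn (fQ w) (Icc a η) := (continuousOn_fQ hw_pos hw_cont hwQ).mono hsub
  have cF : ContinuousOn (fun t => FQ w t ^ p) (Icc a η) :=
    (cw.mul cf).rpow_const fun _ _ => Or.inr hp0.le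
  have cG : ContinuousOn (GQ w μ η) (Icc a η) := by
    refine ContinuousOn.congr (f := fun t => μ + (Real.log (fQ w η) - Real.log (fQ w t))) ?_
      fun t ht => GQ_eq_log hw_pos hw_cont hwQ μ (hsub ht) hη
    exact continuousOn_const.add (continuousOn_const.sub
      (cf.log fun t ht => (hf t (hsub ht)).ne'))
  have cW : ContinuousOn (Wp w p) (Icc a η) :=
    cw.rpow_const fun t ht => Or.inl (hw_pos t (hsub ht)).ne'
  have cH : ContinuousOn (fun t => |u t| ^ p / FQ w t ^ p *
      (Λ + Λ * β / 8 / GQ w μ η t ^ 2)) (Icc a η) :=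
    (cu.div cF fun t ht => (Real.rpow_pos_of_pos (hF t (hsub ht)) _).ne').mul
      (continuousOn_const.add (continuousOn_const.div (cG.pow 2) fun t ht =>
        pow_ne_zero _ (hμ.trans_le (hG t (hsub ht) ht.2)).ne'))
  have hi1 : IntervalIntegrable (fun t => (|u' t| ^ p - |u t| ^ p / FQ w t ^ p *
      (Λ + Λ * β / 8 / GQ w μ η t ^ 2)) * Wp w p t) volume a η :=
    ((cu'.sub cH).mul cW).intervalIntegrable_of_Icc haη.le
  have hi2 : IntervalIntegrable (fun t => (|u' t| ^ p + |u t| ^ p / FQ w t ^ p *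
      (Λ + Λ * β / 8 / GQ w μ η t ^ 2)) * Wp w p t * t) volume a η :=
    (((cu'.add cH).mul cW).mul continuousOn_id).intervalIntegrable_of_Icc haη.le
  have hvan : ∀ t ∈ Ioc 0 a, |u' t| ^ p = 0 ∧ |u t| ^ p = 0 := fun t ht => by
    rw [hu'0 t ht, hua t (ht.2.trans haa₀.le), abs_zero, Real.zero_rpow hp0.ne']
    exact ⟨rfl, rfl⟩
  rw [integral_eq_integral_of_vanishing ha.le hi1 fun t ht => by
      rw [(hvan t ht).1, (hvan t ht).2]; simp,
    integral_eq_integral_of_vanishing ha.le hi2 fun t ht => by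
      rw [(hvan t ht).1, (hvan t ht).2]; simp,
    ge_iff_le, add_comm, ← le_sub_iff_add_le, ← intervalIntegral.integral_const_mul,
    ← intervalIntegral.integral_sub hi1 (hi2.const_mul C₁)]
  have main := intervalIntegral.sub_le_integral_of_hasDeriv_right_of_le
    (g := fun t => |u t| ^ p * (Λ * q * (fQ w t ^ (1 - p) * (1 - β / GQ w μ η t))))
    (g' := fun t => p * |u t| ^ (p - 2) * u t * u' t *
        (Λ * q * (fQ w t ^ (1 - p) * (1 - β / GQ w μ η t))) +
      |u t| ^ p * (Λ * q * -(fQ w t ^ (-p) / w t *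
        ((p - 1) * (1 - β / GQ w μ η t) + β / GQ w μ η t ^ 2))))
    (φ := fun t => (|u' t| ^ p - |u t| ^ p / FQ w t ^ p *
        (Λ + Λ * β / 8 / GQ w μ η t ^ 2)) * Wp w p t - C₁ * ((|u' t| ^ p + |u t| ^ p / FQ w t ^ p *
        (Λ + Λ * β / 8 / GQ w μ η t ^ 2)) * Wp w p t * t))
    haη.le ?_ ?_ ?_ ?_
  · refine le_trans (le_of_eq ?_) main
    simp only [hGη, (hvan a ⟨ha, le_rfl⟩).2]
    ring
  · exact cu.mul (continuousOn_const.mul fun t ht =>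
      (hφd t (hsub ht) ht.2).continuousAt.continuousWithinAt)
  · intro t ht
    have ht0 : 0 < t := ha.trans ht.1
    have hd : HasDerivAt u (u' t) t :=
      (hu t ⟨ht0, ht.2.le⟩).hasDerivAt (Ioc_mem_nhds ht0 ht.2)
    have := ((hasDerivAt_abs_rpow (u t) hp).comp t hd).mul
      ((hφd t ht0 ht.2.le).const_mul (Λ * q))
    exact this.hasDerivWithinAt
  · exact (intervalIntegrable_iff_integrableOn_Icc_of_le haη.le).1 (hi1.sub (hi2.const_mul C₁))
  · intro t ht
    have ht0 : 0 < t := ha.trans ht.1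
    have hGt := hG t ht0 ht.2.le
    have hGt0 : 0 < GQ w μ η t := hμ.trans_le hGt
    have key := picone_weighted h (u := u t) (v := u' t) (f := fQ w t) (w := w t) (β := β)
      (G := GQ w μ η t) (τ := C₁ * t) (Λ := Λ) (hf t ht0) (hw_pos t ht0) hΛ hβ hGt0
      (by rw [div_lt_one hGt0]; exact hβμ.trans_le hGt) hβp (by positivity)
      (by
        have : C₁ * (2 * q * t) ≤ C₁ * (2 * q * η) := by
          have := ht.2.le
          gcongr
        linarith)
      (by
        rw [le_div_iff₀ (by positivity)]
        have := mul_le_mul_of_nonneg_left (hM t ht0 ht.2.le) hC₁.le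
        linarith)
    refine key.trans (le_of_eq ?_)
    simp only [FQ, Wp]
    ring
end

section
/- Let w ∈ P(ℝ₊) be admissible, i.e. there exist η₀>0 and K₀>0 with ∫_t^{η₀} w(s)^{-1} ds ≤ e^{K₀/√t} for all 0<t<η₀. Then for every μ>0 there exist positive numbers η and K such that √t · G_η(t) ≤ K for all t ∈ (0,η). -/
open MeasureTheory Set

/-- `f_η(t) = μ + ∫_t^η w(s)⁻¹ ds`  (case `w ∈ P(ℝ₊)`). -/
noncomputable def fP (w : ℝ → ℝ) (μ η t : ℝ) : ℝ := μ + ∫ s in t..η, (w s)⁻¹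

/-- `F_η(t) = w(t) f_η(t)`. -/
noncomputable def FP (w : ℝ → ℝ) (μ η t : ℝ) : ℝ := w t * fP w μ η t

/-- `G_η(t) = μ + ∫_t^η F_η(s)⁻¹ ds`. -/
noncomputable def GP (w : ℝ → ℝ) (μ η t : ℝ) : ℝ := μ + ∫ s in t..η, (FP w μ η s)⁻¹

/-- The integrand `w⁻¹` is continuous on `(0,∞)`. -/
lemma continuousOn_inv_weight {w : ℝ → ℝ} (hpos : ∀ t, 0 < t → 0 < w t)
    (hcont : ContinuousOn w (Ioi 0)) : ContinuousOn (fun s => (w s)⁻¹) (Ioi 0) :=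
  hcont.inv₀ fun t ht => (hpos t ht).ne'

lemma hasDerivAt_fP {w : ℝ → ℝ} (hpos : ∀ t, 0 < t → 0 < w t)
    (hcont : ContinuousOn w (Ioi 0)) (μ : ℝ) {η t : ℝ} (hη : 0 < η) (ht : 0 < t) :
    HasDerivAt (fP w μ η) (-(w t)⁻¹) t := by
  have hinv := continuousOn_inv_weight hpos hcont
  have hint : IntervalIntegrable (fun s => (w s)⁻¹) volume t η :=
    (hinv.mono fun s hs => (lt_min ht hη).trans_le hs.1).intervalIntegrable
  exact (intervalIntegral.integral_hasDerivAt_left hint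
    (hinv.stronglyMeasurableAtFilter isOpen_Ioi t ht)
    (hinv.continuousAt (Ioi_mem_nhds ht))).const_add μ

lemma fP_pos {w : ℝ → ℝ} (hpos : ∀ t, 0 < t → 0 < w t) {μ η t : ℝ} (hμ : 0 < μ)
    (ht : 0 < t) (htη : t ≤ η) : 0 < fP w μ η t :=
  add_pos_of_pos_of_nonneg hμ <| intervalIntegral.integral_nonneg htη fun s hs =>
    (inv_pos.2 (hpos s (ht.trans_le hs.1))).le

/-- `F_η⁻¹` is minus the logarithmic derivative of `f_η`, so `G_η` is explicit. -/
lemma GP_eq_log {w : ℝ → ℝ} (hpos : ∀ t, 0 < t → 0 < w t)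
    (hcont : ContinuousOn w (Ioi 0)) {μ η t : ℝ} (hμ : 0 < μ) (ht : 0 < t) (htη : t ≤ η) :
    GP w μ η t = μ + (Real.log (fP w μ η t) - Real.log μ) := by
  have hη := ht.trans_le htη
  have hsub : uIcc t η ⊆ Ioi 0 := fun s hs => (lt_min ht hη).trans_le hs.1
  have hfpos : ∀ s ∈ uIcc t η, 0 < fP w μ η s := fun s hs =>
    fP_pos hpos hμ (hsub hs) (uIcc_of_le htη ▸ hs).2
  have hderiv : ∀ s ∈ uIcc t η,
      HasDerivAt (fun x => -Real.log (fP w μ η x)) (FP w μ η s)⁻¹ s := by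
    intro s hs
    refine ((hasDerivAt_fP hpos hcont μ hη (hsub hs)).log (hfpos s hs).ne').neg.congr_deriv ?_
    rw [FP, mul_inv, neg_div, neg_neg, div_eq_mul_inv]
  have hFcont : ContinuousOn (fun s => (FP w μ η s)⁻¹) (uIcc t η) :=
    ((hcont.mono hsub).mul fun s hs =>
      (hasDerivAt_fP hpos hcont μ hη (hsub hs)).continuousAt.continuousWithinAt).inv₀
      fun s hs => (mul_pos (hpos s (hsub hs)) (hfpos s hs)).ne'
  have hfη : fP w μ η η = μ := by simp [fP]
  rw [GP, intervalIntegral.integral_eq_sub_of_hasDerivAt hderiv hFcont.intervalIntegrable, hfη]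
  ring

/-- If `w ∈ P(ℝ₊)` is admissible, then for every `μ > 0` there are
`η, K > 0` with `√t · G_η(t) ≤ K` on `(0,η)`. -/
theorem sqrt_mul_G_bounded_P (w : ℝ → ℝ)
    (hw_pos : ∀ t, 0 < t → 0 < w t)
    (hw_smooth : ContDiffOn ℝ 1 w (Set.Ioi 0))
    (hw_lim : ∃ a : ENNReal, Filter.Tendsto (fun t => ENNReal.ofReal (w t))
        (nhdsWithin (0:ℝ) (Set.Ioi 0)) (nhds a))
    (hwP : ∀ b, 0 < b → ¬ MeasureTheory.IntegrableOn (fun s => (w s)⁻¹) (Set.Ioo 0 b))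
    (hadm : ∃ η₀ K₀ : ℝ, 0 < η₀ ∧ 0 < K₀ ∧ ∀ t, 0 < t → t < η₀ →
        (∫ s in t..η₀, (w s)⁻¹) ≤ Real.exp (K₀ / Real.sqrt t)) :
    ∀ μ : ℝ, 0 < μ → ∃ η K : ℝ, 0 < η ∧ 0 < K ∧
      ∀ t ∈ Set.Ioo (0:ℝ) η, Real.sqrt t * GP w μ η t ≤ K := by
  intro μ hμ
  obtain ⟨η, K₀, hη, hK₀, hbound⟩ := hadm
  have hlog : Real.log μ ≤ Real.log (μ + 1) := Real.log_le_log hμ (by linarith)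
  set C := μ + (Real.log (μ + 1) - Real.log μ) with hC
  have hC0 : 0 < C := by linarith
  refine ⟨η, √η * C + K₀, hη, by positivity, ?_⟩
  rintro t ⟨ht, htη⟩
  have hsqrt : 0 < √t := Real.sqrt_pos.2 ht
  have hf : fP w μ η t ≤ (μ + 1) * Real.exp (K₀ / √t) := by
    have hone : 1 ≤ Real.exp (K₀ / √t) := Real.one_le_exp (by positivity)
    have := hbound t ht htη
    unfold fP
    nlinarith
  have hlogf : Real.log (fP w μ η t) ≤ Real.log (μ + 1) + K₀ / √t := by
    have := Real.log_le_log (fP_pos hw_pos hμ ht htη.le) hf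
    rwa [Real.log_mul (by positivity) (Real.exp_ne_zero _), Real.log_exp] at this
  rw [GP_eq_log hw_pos hw_smooth.continuousOn hμ ht htη.le]
  calc √t * (μ + (Real.log (fP w μ η t) - Real.log μ))
      ≤ √t * (C + K₀ / √t) := mul_le_mul_of_nonneg_left (by linarith) hsqrt.le
    _ = √t * C + K₀ := by field_simp
    _ ≤ √η * C + K₀ := by gcongr
end
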